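/- Let C ⊆ 𝔽₂^n be a binary linear code, X uniform on C, Y^ε the output of BEC(ε), and i ≠ j two coordinates. For every δ ∈ (0,1/2) and ε ∈ (0,1) there exists a constant c(δ,ε) > 0, bounded away from 0 when δ and ε are bounded away from 0 (and ε away from 1), such that: if I(X_i ; Y^ε_{∼i}) ∈ (δ, 1−δ), then I(X_i ; X_j | Y^ε_{∼i,j}) ≥ (c(δ,ε)/√n)·α^ε_{ij}. -/

import Mathlib

open scoped Classical
open Finset

noncomputable section

/-- Vectors in 𝔽₂^n (codewords and binary patterns). -/
abbrev Pattern (n : ℕ) := Fin n → ZMod 2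

/-- Hamming weight. -/
def wH {n : ℕ} (x : Pattern n) : ℕ := hammingNorm x

/-- `z` covers `x` if the support of `x` is contained in the support of `z`. -/
def covers {n : ℕ} (z x : Pattern n) : Prop := ∀ k, x k ≠ 0 → z k ≠ 0

/-- Sample space: a codeword of C together with an erasure pattern (1 = erased). -/
abbrev Samp (n : ℕ) (C : Submodule (ZMod 2) (Pattern n)) := C × Pattern n

/-- Joint probability mass: X uniform on C, coordinates erased i.i.d. with prob. ε. -/
def pmfP {n : ℕ} (C : Submodule (ZMod 2) (Pattern n)) (ε : ℝ) (ω : Samp n C) : ℝ :=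
  (Nat.card C : ℝ)⁻¹ * ε ^ wH ω.2 * (1 - ε) ^ (n - wH ω.2)

/-- The BEC output Y: erased coordinates become `none`. -/
def Yout {n : ℕ} {C : Submodule (ZMod 2) (Pattern n)} (ω : Samp n C) :
    Fin n → Option (ZMod 2) :=
  fun k => if ω.2 k = 1 then none else some (ω.1.1 k)

/-- Y with coordinate i removed. -/
def Ynot {n : ℕ} {C : Submodule (ZMod 2) (Pattern n)} (i : Fin n) (ω : Samp n C) :
    {k : Fin n // k ≠ i} → Option (ZMod 2) :=
  fun k => Yout ω k.1

/-- Y with coordinates i and j removed. -/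
def Ynot2 {n : ℕ} {C : Submodule (ZMod 2) (Pattern n)} (i j : Fin n) (ω : Samp n C) :
    {k : Fin n // k ≠ i ∧ k ≠ j} → Option (ZMod 2) :=
  fun k => Yout ω k.1

/-- Probability of an event under a mass function p. -/
def prE {Ω : Type*} [Fintype Ω] (p : Ω → ℝ) (E : Set Ω) : ℝ :=
  ∑ ω ∈ univ.filter (· ∈ E), p ω

/-- Shannon entropy (in bits) of the random variable f under p. -/
def entr {Ω A : Type*} [Fintype Ω] [Fintype A] (p : Ω → ℝ) (f : Ω → A) : ℝ :=
  -∑ a : A, prE p {ω | f ω = a} * Real.logb 2 (prE p {ω | f ω = a})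

/-- Conditional Shannon entropy H(f | g) in bits. -/
def condEnt {Ω A B : Type*} [Fintype Ω] [Fintype A] [Fintype B]
    (p : Ω → ℝ) (f : Ω → A) (g : Ω → B) : ℝ :=
  -∑ a : A, ∑ b : B,
    prE p {ω | f ω = a ∧ g ω = b} *
      Real.logb 2 (prE p {ω | f ω = a ∧ g ω = b} / prE p {ω | g ω = b})

/-- Mutual information I(f ; g) in bits. -/
def mutInf {Ω A B : Type*} [Fintype Ω] [Fintype A] [Fintype B]
    (p : Ω → ℝ) (f : Ω → A) (g : Ω → B) : ℝ :=
  entr p f - condEnt p f g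

/-- Conditional mutual information I(f ; g | h) in bits. -/
def condMI {Ω A B D : Type*} [Fintype Ω] [Fintype A] [Fintype B] [Fintype D]
    (p : Ω → ℝ) (f : Ω → A) (g : Ω → B) (h : Ω → D) : ℝ :=
  condEnt p f h - condEnt p f (fun ω => (g ω, h ω))

/-- Pr(Z^ε ∈ B) for the random pattern Z^ε = Z^ε(ij) with Z^ε_i = Z^ε_j = 1 and the
remaining coordinates i.i.d. Bernoulli(ε). -/
def probZ {n : ℕ} (ε : ℝ) (i j : Fin n) (B : Set (Pattern n)) : ℝ :=
  ∑ z ∈ univ.filter (fun z : Pattern n => z ∈ B ∧ z i = 1 ∧ z j = 1),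
    ε ^ (univ.filter (fun k => k ≠ i ∧ k ≠ j ∧ z k = 1)).card *
      (1 - ε) ^ (univ.filter (fun k => k ≠ i ∧ k ≠ j ∧ z k = 0)).card

/-- C^{ij}_{ab}(z): codewords c ∈ C with (c_i, c_j) = (a, b) covered by z. -/
def Cab {n : ℕ} (C : Submodule (ZMod 2) (Pattern n)) (i j : Fin n) (a b : ZMod 2)
    (z : Pattern n) : Set (Pattern n) :=
  {c | c ∈ C ∧ c i = a ∧ c j = b ∧ covers z c}

def B1 {n : ℕ} (C : Submodule (ZMod 2) (Pattern n)) (i j : Fin n) : Set (Pattern n) :=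
  {z | Cab C i j 0 1 z = ∅ ∧ Cab C i j 1 0 z = ∅ ∧ Cab C i j 1 1 z = ∅}

def B2 {n : ℕ} (C : Submodule (ZMod 2) (Pattern n)) (i j : Fin n) : Set (Pattern n) :=
  {z | Cab C i j 0 1 z ≠ ∅ ∧ Cab C i j 1 0 z = ∅ ∧ Cab C i j 1 1 z = ∅}

def B3 {n : ℕ} (C : Submodule (ZMod 2) (Pattern n)) (i j : Fin n) : Set (Pattern n) :=
  {z | Cab C i j 1 0 z ≠ ∅ ∧ Cab C i j 0 1 z = ∅ ∧ Cab C i j 1 1 z = ∅}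

def B4 {n : ℕ} (C : Submodule (ZMod 2) (Pattern n)) (i j : Fin n) : Set (Pattern n) :=
  {z | Cab C i j 1 1 z ≠ ∅ ∧ Cab C i j 0 1 z = ∅ ∧ Cab C i j 1 0 z = ∅}

def B5 {n : ℕ} (C : Submodule (ZMod 2) (Pattern n)) (i j : Fin n) : Set (Pattern n) :=
  {z | Cab C i j 0 1 z ≠ ∅ ∧ Cab C i j 1 0 z ≠ ∅ ∧ Cab C i j 1 1 z ≠ ∅}

/-- α^ε_{ij} = Pr(Z^ε ∈ B₄ | Z^ε ∈ B₂ ∪ B₃ ∪ B₄). -/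
def alphaIJ {n : ℕ} (C : Submodule (ZMod 2) (Pattern n)) (ε : ℝ) (i j : Fin n) : ℝ :=
  probZ ε i j (B4 C i j) / probZ ε i j (B2 C i j ∪ B3 C i j ∪ B4 C i j)

/-- single-coordinate weight -/
def phiW (ε : ℝ) (a : ZMod 2) : ℝ := if a = 1 then ε else 1 - ε

/-- product weight -/
def prodW {n : ℕ} (ε : ℝ) (x : Pattern n) : ℝ := ∏ k, phiW ε (x k)

/-- measure of a predicate -/
def muW {n : ℕ} (ε : ℝ) (A : Pattern n → Prop) : ℝ := ∑ x, prodW ε x * (if A x then 1 else 0)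

/-- square root of the sensitivity on A -/
def sens {n : ℕ} (A : Pattern n → Prop) (x : Pattern n) : ℝ :=
  if A x then Real.sqrt ((univ.filter (fun k => ¬ A (Function.update x k 0))).card : ℝ) else 0

lemma phiW_nonneg {ε : ℝ} (h0 : 0 < ε) (h1 : ε < 1) (a : ZMod 2) : 0 < phiW ε a := by
  unfold phiW; split_ifs <;> linarith

lemma prodW_pos {n : ℕ} {ε : ℝ} (h0 : 0 < ε) (h1 : ε < 1) (x : Pattern n) : 0 < prodW ε x :=
  Finset.prod_pos fun k _ => phiW_nonneg h0 h1 _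

lemma le_of_sq_aux {a b : ℝ} (h : a ^ 2 ≤ b ^ 2) (hb : 0 ≤ b) : a ≤ b :=
  abs_le_of_sq_le_sq' h hb |>.2

lemma sum_zmod2 (f : ZMod 2 → ℝ) : ∑ a, f a = f 0 + f 1 := by
  exact Fin.sum_univ_two f

lemma sumW_cons {n : ℕ} (ε : ℝ) (F : Pattern (n+1) → ℝ) :
    ∑ x, prodW ε x * F x =
      (1 - ε) * ∑ y : Pattern n, prodW ε y * F (Fin.cons 0 y) +
      ε * ∑ y : Pattern n, prodW ε y * F (Fin.cons 1 y) := by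
  rw [← (Fin.consEquiv (fun _ : Fin (n+1) => ZMod 2)).sum_comp, Fintype.sum_prod_type, sum_zmod2,
    Finset.mul_sum, Finset.mul_sum]
  congr 1 <;>
  · refine Finset.sum_congr rfl fun y _ => ?_
    simp [Fin.consEquiv, prodW, Fin.prod_univ_succ, phiW]
    ring

lemma sum_prodW {n : ℕ} (ε : ℝ) : ∑ x : Pattern n, prodW ε x = 1 := by
  induction n with
  | zero => simp [prodW]
  | succ n ih =>
    have := sumW_cons (n := n) ε (fun _ => 1)
    simp only [mul_one, ih] at this
    rw [this]; ring

lemma cs_sum {ι : Type*} [Fintype ι] (w f g t : ι → ℝ) (hw : ∀ x, 0 ≤ w x)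
    (ht0 : ∀ x, 0 ≤ t x) (ht : ∀ x, f x ^ 2 + g x ^ 2 ≤ t x ^ 2) :
    (∑ x, w x * f x) ^ 2 + (∑ x, w x * g x) ^ 2 ≤ (∑ x, w x * t x) ^ 2 := by
  set u := ∑ x, w x * f x with hu
  set v := ∑ x, w x * g x with hv
  set T := ∑ x, w x * t x with hT
  have hT0 : 0 ≤ T := Finset.sum_nonneg fun x _ => mul_nonneg (hw x) (ht0 x)
  set r := Real.sqrt (u ^ 2 + v ^ 2) with hr
  have hr0 : 0 ≤ r := Real.sqrt_nonneg _
  have hr2 : r ^ 2 = u ^ 2 + v ^ 2 := Real.sq_sqrt (by positivity)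
  have key : u * u + v * v ≤ r * T := by
    calc u * u + v * v = ∑ x, w x * (u * f x + v * g x) := by
          conv_lhs => rw [hu, hv]
          rw [← hu, ← hv]
          rw [show (u * u + v * v : ℝ) = u * ∑ x, w x * f x + v * ∑ x, w x * g x by rw [← hu, ← hv]]
          rw [Finset.mul_sum, Finset.mul_sum, ← Finset.sum_add_distrib]
          exact Finset.sum_congr rfl fun x _ => by ring
      _ ≤ ∑ x, w x * (r * t x) := by
          refine Finset.sum_le_sum fun x _ => mul_le_mul_of_nonneg_left ?_ (hw x)
          apply le_of_sq_aux
          · rw [mul_pow, hr2]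
            nlinarith [sq_nonneg (u * g x - v * f x), ht x, sq_nonneg u, sq_nonneg v,
              mul_le_mul_of_nonneg_left (ht x) (by positivity : 0 ≤ u ^ 2 + v ^ 2)]
          · exact mul_nonneg hr0 (ht0 x)
      _ = r * T := by
          rw [hT, Finset.mul_sum]
          exact Finset.sum_congr rfl fun x _ => by ring
  rw [← hr2]
  rcases hr0.eq_or_lt with h | h
  · rw [← h]; simp; positivity
  · have : r ≤ T := by
      have : r * r ≤ r * T := by nlinarith
      exact le_of_mul_le_mul_left this h
    exact pow_le_pow_left₀ hr0 this 2

lemma muW_mem {n : ℕ} {ε : ℝ} (h0 : 0 < ε) (h1 : ε < 1) (A : Pattern n → Prop) :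
    0 ≤ muW ε A ∧ muW ε A ≤ 1 := by
  constructor
  · exact Finset.sum_nonneg fun x _ => mul_nonneg (prodW_pos h0 h1 x).le (by split_ifs <;> norm_num)
  · rw [← sum_prodW (n := n) ε]
    refine Finset.sum_le_sum fun x _ => ?_
    have := (prodW_pos h0 h1 x).le
    split_ifs <;> linarith

lemma iso_num {q a0 a1 u T : ℝ} (hq0 : 0 ≤ q) (hq1 : q ≤ 1)
    (ha0 : 0 ≤ a0 ∧ a0 ≤ 1) (ha1 : 0 ≤ a1 ∧ a1 ≤ 1)
    (hu : 1 / 2 * (a1 * (1 - a1)) ≤ u) (hT0 : 0 ≤ T) (hT : u ^ 2 + (a1 - a0) ^ 2 ≤ T ^ 2) :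
    1 / 2 * (a1 * (1 - a1)) + 1 / 2 * q * (a1 - a0) ^ 2 ≤ T := by
  apply le_of_sq_aux _ hT0
  refine le_trans ?_ hT
  have hJ0 : 0 ≤ 1 / 2 * (a1 * (1 - a1)) := by
    have := mul_nonneg ha1.1 (sub_nonneg.2 ha1.2); linarith
  have hJ1 : 1 / 2 * (a1 * (1 - a1)) ≤ 1 / 8 := by nlinarith [sq_nonneg (a1 - 1/2)]
  set J := 1 / 2 * (a1 * (1 - a1))
  have hd : (a1 - a0) ^ 2 ≤ 1 := by
    rw [sq_le_one_iff_abs_le_one, abs_le]; constructor <;> linarith [ha0.1, ha0.2, ha1.1, ha1.2]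
  set D := (a1 - a0) ^ 2 with hD
  have hD0 : 0 ≤ D := sq_nonneg _
  have h1 : J ^ 2 ≤ u ^ 2 := pow_le_pow_left₀ hJ0 hu 2
  have hqD : q * D ≤ D := by nlinarith
  have hqD0 : 0 ≤ q * D := mul_nonneg hq0 hD0
  have h2 : J * (q * D) ≤ 1 / 8 * D := mul_le_mul hJ1 hqD hqD0 (by norm_num)
  have h3 : (q * D) * (q * D) ≤ D * 1 := mul_le_mul hqD (hqD.trans hd) hqD0 hD0
  nlinarith

lemma iso {n : ℕ} {ε : ℝ} (h0 : 0 < ε) (h1 : ε < 1) (A : Pattern n → Prop)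
    (hA : ∀ x k, A (Function.update x k 0) → A (Function.update x k 1)) :
    1 / 2 * (muW ε A * (1 - muW ε A)) ≤ ∑ x, prodW ε x * sens A x := by
  induction n with
  | zero =>
    have h : ∀ x : Pattern 0, x = default := fun x => Subsingleton.elim _ _
    have hs : ∑ x, prodW ε x * sens A x = 0 := by simp [sens]
    rw [hs]
    by_cases hd : A default
    · have : muW ε A = 1 := by
        rw [← sum_prodW (n := 0) ε]
        refine Finset.sum_congr rfl fun x _ => ?_
        rw [h x, if_pos hd, mul_one]
      rw [this]; norm_num
    · have : muW ε A = 0 := by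
        refine Finset.sum_eq_zero fun x _ => ?_
        rw [h x, if_neg hd, mul_zero]
      rw [this]; norm_num
  | succ n ih =>
    set A0 : Pattern n → Prop := fun y => A (Fin.cons 0 y) with hA0
    set A1 : Pattern n → Prop := fun y => A (Fin.cons 1 y) with hA1
    have i0 := ih A0 (fun x k h => by
      have := hA (Fin.cons 0 x) k.succ
      rw [← Fin.cons_update, ← Fin.cons_update] at this
      exact this h)
    have i1 := ih A1 (fun x k h => by
      have := hA (Fin.cons 1 x) k.succ
      rw [← Fin.cons_update, ← Fin.cons_update] at this
      exact this h)
    have h01 : ∀ y, A0 y → A1 y := fun y h => by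
      have := hA (Fin.cons 0 y) 0
      rw [Fin.update_cons_zero, Fin.update_cons_zero] at this
      exact this h
    have hmu : muW ε A = (1 - ε) * muW ε A0 + ε * muW ε A1 := by
      simp only [muW]; rw [sumW_cons]
    rw [sumW_cons]
    have e0 : ∀ y, A0 y → sens A (Fin.cons 0 y) = sens A0 y := fun y hy => by
      have hy' : A (Fin.cons 0 y) := hy
      simp only [sens, hy, hy', if_true, Fin.card_filter_univ_succ, Fin.update_cons_zero,
        not_true, if_false, Function.comp_def, ← Fin.cons_update, hA0]
    have e0' : ∀ y, sens A (Fin.cons 0 y) = sens A0 y := fun y => by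
      by_cases hy : A0 y
      · exact e0 y hy
      · have hy' : ¬ A (Fin.cons 0 y) := hy
        simp only [sens, hy, hy', if_false]
    have e1 : ∀ y, sens A1 y ^ 2 + (if A1 y ∧ ¬ A0 y then (1:ℝ) else 0) ^ 2
        ≤ sens A (Fin.cons 1 y) ^ 2 := fun y => by
      by_cases hy : A1 y
      · have hy' : A (Fin.cons 1 y) := hy
        simp only [sens, hy, hy', if_true, true_and, Fin.card_filter_univ_succ, Fin.update_cons_zero,
          Function.comp_def, ← Fin.cons_update]
        rw [Real.sq_sqrt (by positivity), Real.sq_sqrt (by positivity)]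
        by_cases hz : A0 y
        · have hz' : A (Fin.cons 0 y) := hz
          simp [hz, hz', hA1]
        · have hz' : ¬ A (Fin.cons 0 y) := hz
          simp [hz, hz', hA1, add_comm]
      · simp only [sens, hy, if_false, false_and]
        nlinarith [sq_nonneg (sens A (Fin.cons 1 y))]
    have hs0 : ∀ m (B : Pattern m → Prop) x, 0 ≤ sens B x := fun m B x => by
      unfold sens; split_ifs <;> positivity
    have cs := cs_sum (prodW ε) (sens A1) (fun y => if A1 y ∧ ¬ A0 y then (1:ℝ) else 0)
      (fun y => sens A (Fin.cons 1 y)) (fun x => (prodW_pos h0 h1 x).le) (fun x => hs0 _ _ _) e1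
    have hd : ∑ y, prodW ε y * (if A1 y ∧ ¬ A0 y then (1:ℝ) else 0) = muW ε A1 - muW ε A0 := by
      simp only [muW]; rw [← Finset.sum_sub_distrib]
      refine Finset.sum_congr rfl fun y _ => ?_
      have := h01 y
      by_cases hy : A1 y <;> by_cases hz : A0 y <;> simp_all
    rw [hd] at cs
    have key := iso_num (q := 1 - ε) (by linarith) (by linarith) (muW_mem h0 h1 A0)
      (muW_mem h0 h1 A1) i1
      (Finset.sum_nonneg fun x _ => mul_nonneg (prodW_pos h0 h1 x).le (hs0 _ _ _)) cs
    simp only [e0']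
    rw [hmu]
    have k1 := mul_le_mul_of_nonneg_left key h0.le
    have k0 := mul_le_mul_of_nonneg_left i0 (by linarith : 0 ≤ 1 - ε)
    nlinarith

/-- vertex boundary bound -/
lemma iso_vertex {n : ℕ} {ε : ℝ} (h0 : 0 < ε) (h1 : ε < 1) (A M : Pattern n → Prop)
    (hA : ∀ x k, A (Function.update x k 0) → A (Function.update x k 1))
    (hM : ∀ x k, A x → ¬ A (Function.update x k 0) → M x) :
    1 / 2 * (muW ε A * (1 - muW ε A)) ≤ Real.sqrt n * muW ε M := by
  refine (iso h0 h1 A hA).trans ?_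
  unfold muW
  rw [Finset.mul_sum]
  refine Finset.sum_le_sum fun x _ => ?_
  have hp := (prodW_pos h0 h1 x).le
  rw [mul_left_comm]
  refine mul_le_mul_of_nonneg_left ?_ hp
  unfold sens
  by_cases hx : A x
  · rw [if_pos hx]
    by_cases hm : M x
    · rw [if_pos hm, mul_one]
      apply Real.sqrt_le_sqrt
      have := Finset.card_filter_le (univ : Finset (Fin n)) (fun k => ¬ A (Function.update x k 0))
      simp only [Finset.card_univ, Fintype.card_fin] at this
      exact_mod_cast this
    · have : (univ.filter (fun k => ¬ A (Function.update x k 0))) = ∅ := by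
        ext k; simp only [Finset.mem_filter, Finset.mem_univ, true_and, Finset.notMem_empty, iff_false]
        exact fun h => hm (hM x k hx h)
      rw [this]; simp [hm]
  · rw [if_neg hx]; split_ifs <;> positivity


lemma zmod2_cases (a : ZMod 2) : a = 0 ∨ a = 1 := by
  revert a; decide

lemma zmod2_add_self (a : ZMod 2) : a + a = 0 := by
  revert a; decide

lemma prodW_eq {n : ℕ} (ε : ℝ) (x : Pattern n) :
    prodW ε x = ε ^ wH x * (1 - ε) ^ (n - wH x) := by
  have h1 : (univ.filter (fun k => x k = 1)).card = wH x := by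
    unfold wH hammingNorm
    congr 1; ext k
    rcases zmod2_cases (x k) with h | h <;> simp [h]
  have h2 : (univ.filter (fun k => ¬ x k = 1)).card = n - wH x := by
    have := Finset.card_filter_add_card_filter_not (s := (univ : Finset (Fin n))) (fun k => x k = 1)
    rw [Finset.card_univ, Fintype.card_fin] at this
    omega
  unfold prodW phiW
  rw [Finset.prod_ite, Finset.prod_const, Finset.prod_const, h1, h2]

lemma pmfP_eq {n : ℕ} (C : Submodule (ZMod 2) (Pattern n)) (ε : ℝ) (ω : Samp n C) :
    pmfP C ε ω = (Nat.card C : ℝ)⁻¹ * prodW ε ω.2 := by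
  rw [pmfP, prodW_eq, mul_assoc]

lemma sum_pmfP {n : ℕ} (C : Submodule (ZMod 2) (Pattern n)) (ε : ℝ) (F : Pattern n → ℝ) :
    ∑ ω : Samp n C, pmfP C ε ω * F ω.2 = ∑ x, prodW ε x * F x := by
  simp only [pmfP_eq]
  rw [Fintype.sum_prod_type]
  dsimp only
  rw [Finset.sum_const, Finset.card_univ, ← Nat.card_eq_fintype_card,
    nsmul_eq_mul, Finset.mul_sum]
  refine Finset.sum_congr rfl fun x _ => ?_
  have : (Nat.card C : ℝ) ≠ 0 := by
    exact_mod_cast Nat.card_pos.ne'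
  field_simp

lemma pmfP_pos {n : ℕ} (C : Submodule (ZMod 2) (Pattern n)) {ε : ℝ} (h0 : 0 < ε) (h1 : ε < 1)
    (ω : Samp n C) : 0 < pmfP C ε ω := by
  rw [pmfP_eq]
  have : 0 < (Nat.card C : ℝ) := by exact_mod_cast Nat.card_pos
  have := prodW_pos h0 h1 ω.2
  positivity

lemma condEnt_eq_sum {Ω A B : Type*} [Fintype Ω] [Fintype A] [Fintype B]
    (p : Ω → ℝ) (f : Ω → A) (g : Ω → B) :
    condEnt p f g = ∑ ω, p ω * (- Real.logb 2 (prE p {ω' | f ω' = f ω ∧ g ω' = g ω} /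
      prE p {ω' | g ω' = g ω})) := by
  unfold condEnt
  simp only [mul_neg, Finset.sum_neg_distrib]
  congr 1
  rw [← Fintype.sum_prod_type' (f := fun a b => prE p {ω | f ω = a ∧ g ω = b} *
      Real.logb 2 (prE p {ω | f ω = a ∧ g ω = b} / prE p {ω | g ω = b}))]
  rw [← Finset.sum_fiberwise (s := univ) (g := fun ω => (f ω, g ω))]
  refine Finset.sum_congr rfl fun ab _ => ?_
  obtain ⟨a, b⟩ := ab
  dsimp only
  rw [show ∀ t : ℝ, prE p {ω | f ω = a ∧ g ω = b} * t = ∑ ω ∈ univ.filter (· ∈ {ω | f ω = a ∧ g ω = b}), p ω * t from fun t => by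
    rw [prE, Finset.sum_mul]
    congr]
  refine Finset.sum_congr (by ext ω; simp) fun ω hω => ?_
  simp only [Finset.mem_filter, Finset.mem_univ, true_and, Prod.mk.injEq] at hω
  rw [← hω.1, ← hω.2]

lemma condEnt_eq_undet {Ω B : Type*} [Fintype Ω] [Fintype B]
    (p : Ω → ℝ) (hp : ∀ ω, 0 < p ω) (f : Ω → ZMod 2) (g : Ω → B) (U : Ω → Prop)
    (h1 : ∀ ω, ¬ U ω → ∀ ω', g ω' = g ω → f ω' = f ω)
    (h2 : ∀ ω, U ω → ∃ σ : Ω → Ω, (∀ x, σ (σ x) = x) ∧ (∀ x, p (σ x) = p x) ∧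
      ∀ ω', g ω' = g ω → g (σ ω') = g ω ∧ f (σ ω') = f ω' + 1) :
    condEnt p f g = ∑ ω, p ω * (if U ω then 1 else 0) := by
  rw [condEnt_eq_sum]
  refine Finset.sum_congr rfl fun ω _ => ?_
  congr 1
  have hpos : 0 < prE p {ω' | g ω' = g ω} := by
    unfold prE
    exact Finset.sum_pos (fun x _ => hp x) ⟨ω, by simp⟩
  by_cases hU : U ω
  · rw [if_pos hU]
    obtain ⟨σ, hσ, hpσ, hg⟩ := h2 ω hU
    have e1 : prE p {ω' | f ω' = f ω ∧ g ω' = g ω} =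
        prE p {ω' | ¬ f ω' = f ω ∧ g ω' = g ω} := by
      unfold prE
      refine Finset.sum_bij' (fun x _ => σ x) (fun x _ => σ x) ?_ ?_ ?_ ?_ ?_
      · intro x hx
        simp only [Finset.mem_filter, Finset.mem_univ, true_and, Set.mem_ofPred_eq] at hx ⊢
        obtain ⟨a, b⟩ := hg x hx.2
        refine ⟨?_, a⟩
        rw [b, hx.1]; simp
      · intro x hx
        simp only [Finset.mem_filter, Finset.mem_univ, true_and, Set.mem_ofPred_eq] at hx ⊢
        obtain ⟨a, b⟩ := hg x hx.2
        refine ⟨?_, a⟩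
        rw [b]
        have := hx.1
        revert this; generalize f x = u; generalize f ω = v; revert u v; decide
      · intro x _; exact hσ x
      · intro x _; exact hσ x
      · intro x _; exact (hpσ x).symm
    have e2 : prE p {ω' | g ω' = g ω} = prE p {ω' | f ω' = f ω ∧ g ω' = g ω} +
        prE p {ω' | ¬ f ω' = f ω ∧ g ω' = g ω} := by
      unfold prE
      rw [← Finset.sum_filter_add_sum_filter_not (univ.filter (· ∈ {ω' | g ω' = g ω}))
        (fun x => f x = f ω)]
      congr 1 <;>
      · refine Finset.sum_congr ?_ fun _ _ => rfl
        ext x; simp [and_comm]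
    have e3 : prE p {ω' | f ω' = f ω ∧ g ω' = g ω} / prE p {ω' | g ω' = g ω} = 2⁻¹ := by
      rw [← e1] at e2
      rw [e2] at hpos ⊢
      have : prE p {ω' | f ω' = f ω ∧ g ω' = g ω} ≠ 0 := by
        intro h; rw [h] at hpos; simp at hpos
      field_simp
      norm_num
    rw [e3, Real.logb_inv, Real.logb_self_eq_one (by norm_num)]; norm_num
  · rw [if_neg hU]
    have : {ω' | f ω' = f ω ∧ g ω' = g ω} = {ω' | g ω' = g ω} := by
      ext x; simp only [Set.mem_ofPred_eq]
      exact ⟨fun h => h.2, fun h => ⟨h1 ω hU x h, h⟩⟩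
    rw [this, div_self hpos.ne']; simp

lemma entr_eq {Ω A : Type*} [Fintype Ω] [Fintype A] (p : Ω → ℝ) (hp : ∑ ω, p ω = 1) (f : Ω → A) :
    entr p f = condEnt p f (fun _ => ()) := by
  unfold entr condEnt
  simp [prE, hp]

/-- translation of the codeword -/
lemma translate_cw {n : ℕ} (C : Submodule (ZMod 2) (Pattern n)) (ε : ℝ) (k : C) :
    (∀ x : Samp n C, ((x.1 + k + k, x.2) : Samp n C) = x) ∧
    ∀ x : Samp n C, pmfP C ε (x.1 + k, x.2) = pmfP C ε x := by
  constructor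
  · rintro ⟨c, e⟩
    ext l
    · simp only [Submodule.coe_add, Pi.add_apply]
      rw [add_assoc, zmod2_add_self, add_zero]
    · rfl
  · intro x; rw [pmfP_eq, pmfP_eq]

lemma Yout_translate {n : ℕ} {C : Submodule (ZMod 2) (Pattern n)} (k : C) (ω ω' : Samp n C)
    (l : Fin n) (hl : k.1 l ≠ 0 → ω.2 l = 1) (h : Yout ω' l = Yout ω l) :
    Yout (C := C) (ω'.1 + k, ω'.2) l = Yout ω l := by
  rw [← h]
  unfold Yout at h ⊢
  by_cases h1 : ω'.2 l = 1
  · simp [h1]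
  · by_cases h2 : ω.2 l = 1
    · simp [h1, h2] at h
    · have : k.1 l = 0 := by by_contra hk; exact h2 (hl hk)
      simp [h1, this]

lemma Yout_diff {n : ℕ} {C : Submodule (ZMod 2) (Pattern n)} (ω ω' : Samp n C)
    (l : Fin n) (h : Yout ω' l = Yout ω l) : (ω'.1 + ω.1).1 l ≠ 0 → ω.2 l = 1 := by
  unfold Yout at h
  intro hk
  by_contra h2
  by_cases h1 : ω'.2 l = 1
  · simp [h1, h2] at h
  · simp [h1, h2] at h
    apply hk
    simp only [Submodule.coe_add, Pi.add_apply, h]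
    exact zmod2_add_self _

lemma diff_one {u v : ZMod 2} (h : u ≠ v) : u + v = 1 := by
  revert u v; decide

lemma condEnt_Ynot {n : ℕ} (C : Submodule (ZMod 2) (Pattern n)) {ε : ℝ} (h0 : 0 < ε) (h1 : ε < 1)
    (i : Fin n) :
    condEnt (pmfP C ε) (fun ω => ω.1.1 i) (Ynot i) =
      muW ε (fun e => ∃ k ∈ C, k i = 1 ∧ ∀ l, l ≠ i → k l ≠ 0 → e l = 1) := by
  unfold muW
  rw [← sum_pmfP C]
  refine condEnt_eq_undet _ (pmfP_pos C h0 h1) _ _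
    (fun ω => ∃ k ∈ C, k i = 1 ∧ ∀ l, l ≠ i → k l ≠ 0 → ω.2 l = 1) ?_ ?_
  · intro ω hU ω' hg
    by_contra hf
    refine hU ⟨(ω'.1 + ω.1).1, (ω'.1 + ω.1).2, diff_one hf, fun l hl => ?_⟩
    exact Yout_diff ω ω' l (congrFun hg ⟨l, hl⟩)
  · rintro ω ⟨k, hk, hki, hkl⟩
    obtain ⟨t1, t2⟩ := translate_cw C ε ⟨k, hk⟩
    refine ⟨fun x => (x.1 + ⟨k, hk⟩, x.2), t1, t2, fun ω' hg => ⟨?_, ?_⟩⟩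
    · funext l
      exact Yout_translate ⟨k, hk⟩ ω ω' l.1 (hkl l.1 l.2) (congrFun hg l)
    · simp [hki]

lemma condEnt_Ynot2 {n : ℕ} (C : Submodule (ZMod 2) (Pattern n)) {ε : ℝ} (h0 : 0 < ε) (h1 : ε < 1)
    (i j : Fin n) :
    condEnt (pmfP C ε) (fun ω => ω.1.1 i) (Ynot2 i j) =
      muW ε (fun e => ∃ k ∈ C, k i = 1 ∧ ∀ l, l ≠ i ∧ l ≠ j → k l ≠ 0 → e l = 1) := by
  unfold muW
  rw [← sum_pmfP C]
  refine condEnt_eq_undet _ (pmfP_pos C h0 h1) _ _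
    (fun ω => ∃ k ∈ C, k i = 1 ∧ ∀ l, l ≠ i ∧ l ≠ j → k l ≠ 0 → ω.2 l = 1) ?_ ?_
  · intro ω hU ω' hg
    by_contra hf
    refine hU ⟨(ω'.1 + ω.1).1, (ω'.1 + ω.1).2, diff_one hf, fun l hl => ?_⟩
    exact Yout_diff ω ω' l (congrFun hg ⟨l, hl⟩)
  · rintro ω ⟨k, hk, hki, hkl⟩
    obtain ⟨t1, t2⟩ := translate_cw C ε ⟨k, hk⟩
    refine ⟨fun x => (x.1 + ⟨k, hk⟩, x.2), t1, t2, fun ω' hg => ⟨?_, ?_⟩⟩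
    · funext l
      exact Yout_translate ⟨k, hk⟩ ω ω' l.1 (hkl l.1 l.2) (congrFun hg l)
    · simp [hki]

lemma condEnt_Ynot3 {n : ℕ} (C : Submodule (ZMod 2) (Pattern n)) {ε : ℝ} (h0 : 0 < ε) (h1 : ε < 1)
    (i j : Fin n) :
    condEnt (pmfP C ε) (fun ω => ω.1.1 i) (fun ω => (ω.1.1 j, Ynot2 i j ω)) =
      muW ε (fun e => ∃ k ∈ C, k i = 1 ∧ k j = 0 ∧
        ∀ l, l ≠ i ∧ l ≠ j → k l ≠ 0 → e l = 1) := by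
  unfold muW
  rw [← sum_pmfP C]
  refine condEnt_eq_undet _ (pmfP_pos C h0 h1) _ _
    (fun ω => ∃ k ∈ C, k i = 1 ∧ k j = 0 ∧ ∀ l, l ≠ i ∧ l ≠ j → k l ≠ 0 → ω.2 l = 1) ?_ ?_
  · intro ω hU ω' hg
    by_contra hf
    simp only [Prod.mk.injEq] at hg
    refine hU ⟨(ω'.1 + ω.1).1, (ω'.1 + ω.1).2, diff_one hf, ?_, fun l hl => ?_⟩
    · simp only [Submodule.coe_add, Pi.add_apply, hg.1]
      exact zmod2_add_self _
    exact Yout_diff ω ω' l (congrFun hg.2 ⟨l, hl⟩)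
  · rintro ω ⟨k, hk, hki, hkj, hkl⟩
    obtain ⟨t1, t2⟩ := translate_cw C ε ⟨k, hk⟩
    refine ⟨fun x => (x.1 + ⟨k, hk⟩, x.2), t1, t2, fun ω' hg => ⟨?_, ?_⟩⟩
    · simp only [Prod.mk.injEq] at hg ⊢
      refine ⟨by simp [hkj, hg.1], ?_⟩
      funext l
      exact Yout_translate ⟨k, hk⟩ ω ω' l.1 (hkl l.1 l.2) (congrFun hg.2 l)
    · simp [hki]

lemma entr_X {n : ℕ} (C : Submodule (ZMod 2) (Pattern n)) {ε : ℝ} (h0 : 0 < ε) (h1 : ε < 1)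
    (i : Fin n) :
    entr (pmfP C ε) (fun ω => ω.1.1 i) = if ∃ k ∈ C, k i = 1 then 1 else 0 := by
  have hs : ∑ ω, pmfP C ε ω = 1 := by
    have := sum_pmfP C ε (fun _ => 1)
    simpa [sum_prodW] using this
  rw [entr_eq _ hs]
  rw [condEnt_eq_undet _ (pmfP_pos C h0 h1) _ _ (fun _ => ∃ k ∈ C, k i = 1)]
  · rw [← Finset.sum_mul, hs, one_mul]
    congr
  · intro ω hU ω' hg
    by_contra hf
    exact hU ⟨(ω'.1 + ω.1).1, (ω'.1 + ω.1).2, diff_one hf⟩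
  · rintro ω ⟨k, hk, hki⟩
    obtain ⟨t1, t2⟩ := translate_cw C ε ⟨k, hk⟩
    refine ⟨fun x => (x.1 + ⟨k, hk⟩, x.2), t1, t2, fun ω' hg => ⟨rfl, ?_⟩⟩
    simp [hki]

/-- set coordinates i, j to 1 -/
def fillIJ {n : ℕ} (i j : Fin n) (e : Pattern n) : Pattern n :=
  fun l => if l = i ∨ l = j then 1 else e l

lemma probZ_eq {n : ℕ} (ε : ℝ) (i j : Fin n) (B : Set (Pattern n)) :
    probZ ε i j B = muW ε (fun e => fillIJ i j e ∈ B) := by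
  unfold probZ muW
  simp only [mul_ite, mul_one, mul_zero]
  rw [← Finset.sum_filter]
  rw [← Finset.sum_fiberwise_of_maps_to (s := univ.filter (fun e => fillIJ i j e ∈ B)) (g := fillIJ i j)
    (t := univ.filter (fun z : Pattern n => z ∈ B ∧ z i = 1 ∧ z j = 1))]
  · refine Finset.sum_congr rfl fun z hz => ?_
    simp only [Finset.mem_filter, Finset.mem_univ, true_and] at hz
    obtain ⟨hB, hi, hj⟩ := hz
    have e1 : ((univ.filter (fun e => fillIJ i j e ∈ B)).filter (fun e => fillIJ i j e = z)) =
        Fintype.piFinset (fun l => if l = i ∨ l = j then (univ : Finset (ZMod 2)) else {z l}) := by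
      ext e
      simp only [Finset.mem_filter, Finset.mem_univ, true_and, Fintype.mem_piFinset]
      constructor
      · rintro ⟨_, rfl⟩ l
        unfold fillIJ
        split_ifs <;> simp
      · intro h
        have : fillIJ i j e = z := by
          funext l
          have := h l
          unfold fillIJ
          split_ifs at this ⊢ with hl
          · rcases hl with rfl | rfl
            · exact hi.symm
            · exact hj.symm
          · simpa using this
        exact ⟨this ▸ hB, this⟩
    rw [e1]
    unfold prodW
    rw [← Finset.prod_univ_sum]
    have e2 : ∀ l, (∑ a ∈ (if l = i ∨ l = j then (univ : Finset (ZMod 2)) else {z l}), phiW ε a) =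
        (if l ≠ i ∧ l ≠ j ∧ z l = 1 then ε else 1) *
        (if l ≠ i ∧ l ≠ j ∧ z l = 0 then 1 - ε else 1) := by
      intro l
      by_cases hl : l = i ∨ l = j
      · rw [if_pos hl, sum_zmod2]
        have a1 : ¬ (l ≠ i ∧ l ≠ j ∧ z l = 1) := by tauto
        have a2 : ¬ (l ≠ i ∧ l ≠ j ∧ z l = 0) := by tauto
        rw [if_neg a1, if_neg a2]
        simp [phiW]
      · rw [if_neg hl]
        push Not at hl
        rcases zmod2_cases (z l) with h | h <;> simp [hl.1, hl.2, h, phiW]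
    simp only [e2]
    rw [Finset.prod_mul_distrib, Finset.prod_ite, Finset.prod_ite]
    simp
  · intro e he
    simp only [Finset.mem_filter, Finset.mem_univ, true_and] at he ⊢
    exact ⟨he, by simp [fillIJ], by simp [fillIJ]⟩

lemma muW_mono {n : ℕ} {ε : ℝ} (h0 : 0 < ε) (h1 : ε < 1) {A B : Pattern n → Prop}
    (h : ∀ x, A x → B x) : muW ε A ≤ muW ε B := by
  refine Finset.sum_le_sum fun x _ => mul_le_mul_of_nonneg_left ?_ (prodW_pos h0 h1 x).le
  have := h x
  by_cases ha : A x <;> by_cases hb : B x <;> simp_all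

lemma muW_union {n : ℕ} {ε : ℝ} (h0 : 0 < ε) (h1 : ε < 1) {A B D : Pattern n → Prop}
    (h : ∀ x, A x → B x ∨ D x) : muW ε A ≤ muW ε B + muW ε D := by
  unfold muW
  rw [← Finset.sum_add_distrib]
  refine Finset.sum_le_sum fun x _ => ?_
  rw [← mul_add]
  refine mul_le_mul_of_nonneg_left ?_ (prodW_pos h0 h1 x).le
  have := h x
  by_cases ha : A x <;> by_cases hb : B x <;> by_cases hd : D x <;> simp_all

lemma muW_disj {n : ℕ} {ε : ℝ} (h0 : 0 < ε) (h1 : ε < 1) {A B D : Pattern n → Prop}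
    (h : ∀ x, B x → A x ∧ ¬ D x) (h' : ∀ x, D x → A x) : muW ε B + muW ε D ≤ muW ε A := by
  unfold muW
  rw [← Finset.sum_add_distrib]
  refine Finset.sum_le_sum fun x _ => ?_
  rw [← mul_add]
  refine mul_le_mul_of_nonneg_left ?_ (prodW_pos h0 h1 x).le
  have := h x
  have := h' x
  by_cases ha : A x <;> by_cases hb : B x <;> by_cases hd : D x <;> simp_all

section codes
variable {n : ℕ} (C : Submodule (ZMod 2) (Pattern n)) (i j : Fin n)

lemma Cab_add {a b a' b' : ZMod 2} {z c c' : Pattern n} (h : c ∈ Cab C i j a b z)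
    (h' : c' ∈ Cab C i j a' b' z) : c + c' ∈ Cab C i j (a + a') (b + b') z := by
  obtain ⟨h1, h2, h3, h4⟩ := h
  obtain ⟨g1, g2, g3, g4⟩ := h'
  refine ⟨C.add_mem h1 g1, by simp [h2, g2], by simp [h3, g3], fun k hk => ?_⟩
  by_cases hc : c k = 0
  · apply g4; intro h; apply hk; simp [hc, h]
  · exact h4 k hc

lemma Cab_mono {a b : ZMod 2} {z z' c : Pattern n} (hz : ∀ l, z l ≠ 0 → z' l ≠ 0)
    (h : c ∈ Cab C i j a b z) : c ∈ Cab C i j a b z' :=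
  ⟨h.1, h.2.1, h.2.2.1, fun k hk => hz k (h.2.2.2 k hk)⟩

lemma Cab_drop {a b : ZMod 2} {x c : Pattern n} (k : Fin n) (hk : c k = 0)
    (h : c ∈ Cab C i j a b (fillIJ i j x)) :
    c ∈ Cab C i j a b (fillIJ i j (Function.update x k 0)) := by
  refine ⟨h.1, h.2.1, h.2.2.1, fun l hl => ?_⟩
  have := h.2.2.2 l hl
  unfold fillIJ at this ⊢
  have hlk : l ≠ k := by rintro rfl; exact hl hk
  rwa [Function.update_of_ne hlk]

lemma mem_Cab_fill {a b : ZMod 2} {x c : Pattern n} :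
    c ∈ Cab C i j a b (fillIJ i j x) ↔
      c ∈ C ∧ c i = a ∧ c j = b ∧ ∀ l, l ≠ i ∧ l ≠ j → c l ≠ 0 → x l = 1 := by
  unfold Cab covers fillIJ
  simp only [Set.mem_ofPred_eq]
  refine and_congr_right fun _ => and_congr_right fun _ => and_congr_right fun _ => ?_
  refine forall_congr' fun l => ?_
  by_cases hl : l = i ∨ l = j
  · have : ¬ (l ≠ i ∧ l ≠ j) := by tauto
    simp [hl, this]
  · have : (l ≠ i ∧ l ≠ j) := by tauto
    rw [if_neg hl]
    rcases zmod2_cases (x l) with h | h <;> simp [h, this.1, this.2]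

lemma B1_mono {z z' : Pattern n} (hz : ∀ l, z l ≠ 0 → z' l ≠ 0) (h : z' ∈ B1 C i j) :
    z ∈ B1 C i j := by
  obtain ⟨h1, h2, h3⟩ := h
  refine ⟨?_, ?_, ?_⟩ <;> rw [Set.eq_empty_iff_forall_notMem] at * <;>
  intro c hc
  · exact h1 c (Cab_mono C i j hz hc)
  · exact h2 c (Cab_mono C i j hz hc)
  · exact h3 c (Cab_mono C i j hz hc)

lemma not_B1_cases {z : Pattern n} (h : z ∉ B1 C i j) :
    z ∈ B2 C i j ∪ B3 C i j ∪ B4 C i j ∨ z ∈ B5 C i j := by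
  have a1 : Cab C i j 0 1 z ≠ ∅ → Cab C i j 1 0 z ≠ ∅ → Cab C i j 1 1 z ≠ ∅ := by
    simp only [← Set.nonempty_iff_ne_empty]
    rintro ⟨c, hc⟩ ⟨c', hc'⟩
    exact ⟨_, by simpa using Cab_add C i j hc hc'⟩
  have a2 : Cab C i j 0 1 z ≠ ∅ → Cab C i j 1 1 z ≠ ∅ → Cab C i j 1 0 z ≠ ∅ := by
    simp only [← Set.nonempty_iff_ne_empty]
    rintro ⟨c, hc⟩ ⟨c', hc'⟩
    exact ⟨_, by simpa [zmod2_add_self] using Cab_add C i j hc hc'⟩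
  have a3 : Cab C i j 1 0 z ≠ ∅ → Cab C i j 1 1 z ≠ ∅ → Cab C i j 0 1 z ≠ ∅ := by
    simp only [← Set.nonempty_iff_ne_empty]
    rintro ⟨c, hc⟩ ⟨c', hc'⟩
    exact ⟨_, by simpa [zmod2_add_self] using Cab_add C i j hc hc'⟩
  simp only [B1, B2, B3, B4, B5, Set.mem_union, Set.mem_ofPred_eq] at h ⊢
  tauto

lemma boundary_mid {x : Pattern n} (k : Fin n) (h : fillIJ i j x ∉ B1 C i j)
    (h' : fillIJ i j (Function.update x k 0) ∈ B1 C i j) :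
    fillIJ i j x ∈ B2 C i j ∪ B3 C i j ∪ B4 C i j := by
  rcases not_B1_cases C i j h with h5 | h5
  · exact h5
  exfalso
  obtain ⟨h1, h2, h3⟩ := h'
  simp only [B5, Set.mem_ofPred_eq, ← Set.nonempty_iff_ne_empty] at h5
  obtain ⟨⟨c, hc⟩, ⟨c', hc'⟩, -⟩ := h5
  rw [Set.eq_empty_iff_forall_notMem] at h1 h2 h3
  rcases zmod2_cases (c k) with hk | hk
  · exact h1 c (Cab_drop C i j k hk hc)
  rcases zmod2_cases (c' k) with hk' | hk'
  · exact h2 c' (Cab_drop C i j k hk' hc')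
  have := Cab_drop C i j k (by rw [Pi.add_apply, hk, hk']; exact zmod2_add_self 1)
    (Cab_add C i j hc hc')
  rw [zero_add, add_zero] at this
  exact h3 _ this

end codes

lemma condMI_ge {n : ℕ} (C : Submodule (ZMod 2) (Pattern n)) {ε : ℝ} (h0 : 0 < ε) (h1 : ε < 1)
    (i j : Fin n) :
    probZ ε i j (B4 C i j) ≤
      condMI (pmfP C ε) (fun ω => ω.1.1 i) (fun ω => ω.1.1 j) (Ynot2 i j) := by
  unfold condMI
  rw [condEnt_Ynot2 C h0 h1, condEnt_Ynot3 C h0 h1, probZ_eq, le_sub_iff_add_le]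
  refine muW_disj h0 h1 ?_ ?_
  · rintro x ⟨a, _, b⟩
    rw [← Set.nonempty_iff_ne_empty] at a
    obtain ⟨c, hc⟩ := a
    obtain ⟨c1, c2, c3, c4⟩ := (mem_Cab_fill C i j).1 hc
    refine ⟨⟨c, c1, c2, c4⟩, ?_⟩
    rintro ⟨k, k1, k2, k3, k4⟩
    have := (mem_Cab_fill C i j (a := 1) (b := 0) (x := x) (c := k)).2 ⟨k1, k2, k3, k4⟩
    rw [b] at this
    exact this
  · rintro x ⟨k, k1, k2, k3, k4⟩
    exact ⟨k, k1, k2, k4⟩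

lemma mid_bound {n : ℕ} (C : Submodule (ZMod 2) (Pattern n)) {ε δ : ℝ} (h0 : 0 < ε) (h1 : ε < 1)
    (hδ : 0 < δ) (hδ' : δ < 1 / 2) (i j : Fin n)
    (hI : mutInf (pmfP C ε) (fun ω => ω.1.1 i) (Ynot i) ∈ Set.Ioo δ (1 - δ)) :
    δ ^ 2 / 4 ≤ Real.sqrt n * probZ ε i j (B2 C i j ∪ B3 C i j ∪ B4 C i j) := by
  unfold mutInf at hI
  rw [entr_X C h0 h1, condEnt_Ynot C h0 h1] at hI
  set H := muW ε (fun e => ∃ k ∈ C, k i = 1 ∧ ∀ l, l ≠ i → k l ≠ 0 → e l = 1) with hH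
  have hH0 : 0 ≤ H := (muW_mem h0 h1 _).1
  split_ifs at hI with hex
  swap
  · exfalso; linarith [hI.1]
  have iso := iso_vertex h0 h1 (fun e => fillIJ i j e ∉ B1 C i j)
    (fun e => fillIJ i j e ∈ B2 C i j ∪ B3 C i j ∪ B4 C i j)
    (fun x k h h' => h (B1_mono C i j (fun l => by
      unfold fillIJ
      by_cases hl : l = k
      · subst hl; split_ifs <;> simp
      · rw [Function.update_of_ne hl, Function.update_of_ne hl]; exact id) h'))
    (fun x k h h' => boundary_mid C i j k h (not_not.1 h'))
  rw [probZ_eq]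
  set M := muW ε (fun e => fillIJ i j e ∈ B2 C i j ∪ B3 C i j ∪ B4 C i j)
  set a := muW ε (fun e => fillIJ i j e ∉ B1 C i j)
  have hM0 : 0 ≤ M := (muW_mem h0 h1 _).1
  have ha : a ≤ 1 := (muW_mem h0 h1 _).2
  have hab : a ≤ M + muW ε (fun e => fillIJ i j e ∈ B5 C i j) :=
    muW_union h0 h1 fun x hx => not_B1_cases C i j hx
  have hb : muW ε (fun e => fillIJ i j e ∈ B5 C i j) ≤ H := by
    refine muW_mono h0 h1 fun x hx => ?_
    simp only [B5, Set.mem_ofPred_eq, ← Set.nonempty_iff_ne_empty] at hx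
    obtain ⟨-, ⟨c, hc⟩, -⟩ := hx
    obtain ⟨c1, c2, c3, c4⟩ := (mem_Cab_fill C i j).1 hc
    refine ⟨c, c1, c2, fun l hl hcl => c4 l ⟨hl, ?_⟩ hcl⟩
    rintro rfl; exact hcl c3
  have hHa : H ≤ a := by
    refine muW_mono h0 h1 ?_
    rintro x ⟨k, k1, k2, k3⟩ hx
    have := (mem_Cab_fill C i j (a := 1) (b := k j) (x := x) (c := k)).2
      ⟨k1, k2, rfl, fun l hl => k3 l hl.1⟩
    obtain ⟨_, x2, x3⟩ := hx
    rcases zmod2_cases (k j) with h | h <;> rw [h] at this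
    · rw [x2] at this; exact this
    · rw [x3] at this; exact this
  have hn : 1 ≤ Real.sqrt n := by
    rw [Real.one_le_sqrt]
    have : 0 < n := i.pos
    exact_mod_cast this
  obtain ⟨hI1, hI2⟩ := hI
  by_cases hM : δ / 2 ≤ M
  · have : M ≤ Real.sqrt n * M := le_mul_of_one_le_left hM0 hn
    nlinarith
  · push Not at hM
    refine le_trans ?_ iso
    have : δ * (δ / 2) ≤ a * (1 - a) :=
      mul_le_mul (by linarith) (by linarith) (by linarith) (by linarith)
    linarith

theorem condMI_blowing_up_bound :
    ∃ c : ℝ → ℝ → ℝ,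
      (∀ δ ε : ℝ, δ ∈ Set.Ioo (0 : ℝ) (1 / 2) → ε ∈ Set.Ioo (0 : ℝ) 1 → 0 < c δ ε) ∧
      (∀ δ₀ ε₀ ε₁ : ℝ, 0 < δ₀ → 0 < ε₀ → ε₁ < 1 →
        ∃ m : ℝ, 0 < m ∧
          ∀ δ ε : ℝ, δ₀ ≤ δ → δ < 1 / 2 → ε₀ ≤ ε → ε ≤ ε₁ → m ≤ c δ ε) ∧
      ∀ (n : ℕ) (C : Submodule (ZMod 2) (Pattern n)) (i j : Fin n), i ≠ j →
        ∀ δ ε : ℝ, δ ∈ Set.Ioo (0 : ℝ) (1 / 2) → ε ∈ Set.Ioo (0 : ℝ) 1 →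
          mutInf (pmfP C ε) (fun ω => ω.1.1 i) (Ynot i) ∈ Set.Ioo δ (1 - δ) →
          condMI (pmfP C ε) (fun ω => ω.1.1 i) (fun ω => ω.1.1 j) (Ynot2 i j) ≥
            c δ ε / Real.sqrt n * alphaIJ C ε i j := by
  refine ⟨fun δ _ => δ ^ 2 / 4, ?_, ?_, ?_⟩
  · intro δ ε hδ _
    have := hδ.1
    positivity
  · intro δ₀ ε₀ ε₁ hδ₀ _ _
    refine ⟨δ₀ ^ 2 / 4, by positivity, fun δ ε h _ _ _ => ?_⟩
    have := pow_le_pow_left₀ hδ₀.le h 2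
    linarith
  · intro n C i j _ δ ε hδ hε hI
    have hmid := mid_bound C hε.1 hε.2 hδ.1 hδ.2 i j hI
    have hMI := condMI_ge C hε.1 hε.2 i j
    have hP : 0 ≤ probZ ε i j (B4 C i j) := by
      rw [probZ_eq]; exact (muW_mem hε.1 hε.2 _).1
    refine le_trans ?_ hMI
    unfold alphaIJ
    set M := probZ ε i j (B2 C i j ∪ B3 C i j ∪ B4 C i j)
    have hδ0 : 0 < δ := hδ.1
    have hs : 0 < Real.sqrt n := by
      have : 0 < n := i.pos
      exact Real.sqrt_pos.2 (by exact_mod_cast this)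
    have hM : 0 < M := by
      by_contra h
      push Not at h
      have h1 : Real.sqrt n * M ≤ 0 := mul_nonpos_of_nonneg_of_nonpos hs.le h
      have h2 : 0 < δ ^ 2 / 4 := by positivity
      linarith
    rw [div_mul_div_comm, div_le_iff₀ (by positivity), mul_comm]
    exact mul_le_mul_of_nonneg_left hmid hP

end
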